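/- arXiv:2502.20909 — 3 statements merged into one kernel-verified Lean document; each statement's English description precedes it below -/
import Mathlib

section
/- Let κ, υ, μ be real numbers with 0 ≤ κ, κ + υ ≤ 1, 3/4 ≤ υ ≤ 1, and 0 ≤ μ ≤ 1. Then (1-υ)·h(κ/(1-υ)) + κ·lg(μ/(1-υ)) + 1 - κ - υ ≤ 1.04 (where in the degenerate case υ = 1, so that κ = 0, all terms involving division by 1-υ are interpreted as 0). -/
/-- The binary entropy function (base 2), with the convention `0 · lg 0 = 0`
(note `Real.logb 2 0 = 0` in Mathlib). -/
noncomputable def binEnt (x : ℝ) : ℝ :=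
  -x * Real.logb 2 x - (1 - x) * Real.logb 2 (1 - x)

theorem binEnt_le_one_aux (x : ℝ) : binEnt x ≤ 1 := by
  have h2 : 0 < Real.log 2 := Real.log_pos (by norm_num)
  have h : binEnt x = Real.binEntropy x / Real.log 2 := by
    unfold binEnt Real.binEntropy Real.logb
    rw [Real.log_inv, Real.log_inv]
    ring
  rw [h, div_le_one h2]
  exact Real.binEntropy_le_log_two

theorem neg_mul_logb_le_aux (s : ℝ) (hs : 0 < s) : -(s * Real.logb 2 s) ≤ 0.54 := by
  have h2 : 0.6931471803 < Real.log 2 := Real.log_two_gt_d9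
  have hpos : 0 < Real.log 2 := by linarith
  have h := Real.add_one_le_exp (-Real.log s - 1)
  have he : Real.exp (-Real.log s - 1) = s⁻¹ * (Real.exp 1)⁻¹ := by
    rw [sub_eq_add_neg, Real.exp_add, Real.exp_neg, Real.exp_neg, Real.exp_log hs]
  rw [he] at h
  have h3 : s * (-Real.log s) ≤ (Real.exp 1)⁻¹ := by
    calc s * (-Real.log s) ≤ s * (s⁻¹ * (Real.exp 1)⁻¹) :=
          mul_le_mul_of_nonneg_left (by linarith) hs.le
      _ = (Real.exp 1)⁻¹ := by field_simp
  have h4 : (Real.exp 1)⁻¹ ≤ 0.37 := by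
    have := Real.exp_one_gt_d9
    rw [inv_le_comm₀ (by linarith) (by norm_num)]
    norm_num at this ⊢
    linarith
  have h5 : -(s * Real.logb 2 s) = (s * (-Real.log s)) / Real.log 2 := by
    unfold Real.logb
    ring
  rw [h5, div_le_iff₀ hpos]
  linarith

theorem objective_le_of_upsilon_large (κ υ μ : ℝ)
    (hκ : 0 ≤ κ) (hκυ : κ + υ ≤ 1) (hυ : 3 / 4 ≤ υ) (hυ1 : υ ≤ 1)
    (hμ0 : 0 ≤ μ) (hμ1 : μ ≤ 1) :
    (1 - υ) * binEnt (κ / (1 - υ)) + κ * Real.logb 2 (μ / (1 - υ)) + 1 - κ - υ ≤ 1.04 := by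
  have hb : (1 - υ) * binEnt (κ / (1 - υ)) ≤ (1 - υ) * 1 :=
    mul_le_mul_of_nonneg_left (binEnt_le_one_aux _) (by linarith)
  have hl : κ * Real.logb 2 (μ / (1 - υ)) ≤ 0.54 := by
    rcases hμ0.eq_or_lt with h0 | h0
    · rw [← h0]
      norm_num
    rcases hυ1.eq_or_lt with h1 | h1
    · rw [h1]
      norm_num
    have hs : 0 < 1 - υ := by linarith
    have hA := neg_mul_logb_le_aux _ hs
    have hm : Real.logb 2 μ ≤ 0 := Real.logb_nonpos (by norm_num) hμ0 hμ1
    have hn : Real.logb 2 (1 - υ) ≤ 0 := Real.logb_nonpos (by norm_num) hs.le (by linarith)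
    rw [Real.logb_div h0.ne' hs.ne']
    have e1 := mul_nonneg hκ (neg_nonneg.2 hm)
    have e2 := mul_nonneg (sub_nonneg.2 (show κ ≤ 1 - υ by linarith)) (neg_nonneg.2 hn)
    nlinarith
  norm_num at hl ⊢
  linarith
end

section
/- Let μ, μ', κ, κ', υ, υ' be real numbers satisfying: 0 ≤ μ ≤ 1, 0 ≤ μ' ≤ 1, 0 ≤ κ ≤ μ, 0 ≤ κ' ≤ μ', 0 ≤ υ, κ + υ ≤ 1, 0 ≤ υ', κ' + υ' ≤ 1, κ ≤ υ', κ' ≤ υ, and μ + μ' - υ - υ' ≤ 3/2. Then min{ (1-υ)·h(κ/(1-υ)) + κ·lg(μ/(1-υ)) + 1 - κ - υ , (1-υ')·h(κ'/(1-υ')) + κ'·lg(μ'/(1-υ')) + 1 - κ' - υ' } < 1.2992 (where in a degenerate case υ = 1, forcing κ = 0, the terms of the corresponding expression involving division by 1-υ are interpreted as 0, and similarly for υ' = 1). -/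
/-- Tangent-line bound for the concave homogeneous function `x log (y / x)`. -/
theorem tangent_bound (x y a : ℝ) (hx : 0 ≤ x) (hy : 0 ≤ y) (hxy : 0 < x → 0 < y) (ha : 0 < a) :
    x * (Real.log y - Real.log x) ≤ x * (Real.log a - 1) + y / a := by
  rcases hx.eq_or_lt with rfl | hx
  · simp; positivity
  have hy' := hxy hx
  have h := Real.log_le_sub_one_of_pos (show 0 < y / (x * a) by positivity)
  rw [Real.log_div hy'.ne' (by positivity), Real.log_mul hx.ne' ha.ne'] at h
  have h2 := mul_le_mul_of_nonneg_left h hx.le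
  have h3 : x * (y / (x * a) - 1) = y / a - x := by field_simp
  rw [h3] at h2
  linarith

theorem log_a_lt : Real.log 4.555 ≤ 1.51630 := by
  have h1 : (4.555 : ℝ) = 2 ^ 2 * 1.13875 := by norm_num
  rw [h1, Real.log_mul (by norm_num) (by norm_num), Real.log_pow]
  have h2 : Real.log 1.13875 ≤ 0.13 := by
    rw [Real.log_le_iff_le_exp (by norm_num)]
    refine le_trans ?_ (Real.sum_le_exp_of_nonneg (by norm_num) 5)
    norm_num [Finset.sum_range_succ, Nat.factorial]
  have := Real.log_two_lt_d9
  push_cast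
  linarith

/-- The linear upper bound of one of the two objective expressions. -/
theorem obj_bound (μ κ υ : ℝ) (hμ0 : 0 ≤ μ) (hκ0 : 0 ≤ κ) (hκμ : κ ≤ μ) (hκυ : κ + υ ≤ 1) :
    ((1 - υ) * binEnt (κ / (1 - υ)) + κ * Real.logb 2 (μ / (1 - υ)) + 1 - κ - υ) * Real.log 2
      ≤ κ * 0.51630 + μ / 4.555 + (1 - υ) * 0.73576 := by
  have hl2 : 0 < Real.log 2 := Real.log_pos (by norm_num)
  obtain ⟨s, rfl⟩ : ∃ s, υ = 1 - s := ⟨1 - υ, by ring⟩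
  have hκs : κ ≤ s := by linarith
  simp only [sub_sub_cancel]
  have key : (s * binEnt (κ / s) + κ * Real.logb 2 (μ / s) + 1 - κ - (1 - s)) * Real.log 2
      = κ * (Real.log μ - Real.log κ) + (s - κ) * (Real.log (2 * s) - Real.log (s - κ)) := by
    rcases (hκ0.trans hκs).eq_or_lt with h0 | hs
    · have : κ = 0 := by linarith
      subst this
      rw [← h0]; simp
    have e1 : ∀ x, Real.logb 2 x * Real.log 2 = Real.log x := fun x => by
      unfold Real.logb; field_simp
    have e2 : (s * binEnt (κ / s) + κ * Real.logb 2 (μ / s) + 1 - κ - (1 - s)) * Real.log 2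
        = -κ * Real.log (κ / s) - (s - κ) * Real.log ((s - κ) / s) + κ * Real.log (μ / s)
          + (s - κ) * Real.log 2 := by
      unfold binEnt
      rw [show 1 - κ / s = (s - κ) / s by field_simp]
      rw [← e1 (κ / s), ← e1 ((s - κ) / s), ← e1 (μ / s)]
      field_simp
      ring
    rw [e2, Real.log_mul (by norm_num) hs.ne']
    have e3 : κ * Real.log (κ / s) = κ * (Real.log κ - Real.log s) := by
      rcases hκ0.eq_or_lt with rfl | h
      · simp
      · rw [Real.log_div h.ne' hs.ne']
    have e4 : κ * Real.log (μ / s) = κ * (Real.log μ - Real.log s) := by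
      rcases hκ0.eq_or_lt with rfl | h
      · simp
      · rw [Real.log_div (by linarith) hs.ne']
    have e5 : (s - κ) * Real.log ((s - κ) / s) = (s - κ) * (Real.log (s - κ) - Real.log s) := by
      rcases hκs.eq_or_lt with rfl | h
      · simp
      · rw [Real.log_div (by linarith) hs.ne']
    linear_combination -e3 + e4 - e5
  rw [key]
  have t1 := tangent_bound κ μ 4.555 hκ0 hμ0 (fun h => by linarith) (by norm_num)
  have t2 := tangent_bound (s - κ) (2 * s) (Real.exp 1) (by linarith) (by linarith)
    (fun h => by linarith) (Real.exp_pos 1)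
  rw [Real.log_exp] at t2
  have t3 : 2 * s / Real.exp 1 ≤ s * 0.73576 := by
    rw [div_le_iff₀ (Real.exp_pos 1)]
    have := Real.exp_one_gt_d9
    nlinarith
  have t4 := mul_le_mul_of_nonneg_left log_a_lt hκ0
  linarith

theorem max_P_lt (μ μ' κ κ' υ υ' : ℝ)
    (hμ0 : 0 ≤ μ) (hμ1 : μ ≤ 1) (hμ'0 : 0 ≤ μ') (hμ'1 : μ' ≤ 1)
    (hκ0 : 0 ≤ κ) (hκμ : κ ≤ μ) (hκ'0 : 0 ≤ κ') (hκ'μ' : κ' ≤ μ')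
    (hυ0 : 0 ≤ υ) (hκυ : κ + υ ≤ 1) (hυ'0 : 0 ≤ υ') (hκ'υ' : κ' + υ' ≤ 1)
    (hκυ' : κ ≤ υ') (hκ'υ : κ' ≤ υ)
    (hzone : μ + μ' - υ - υ' ≤ 3 / 2) :
    min ((1 - υ) * binEnt (κ / (1 - υ)) + κ * Real.logb 2 (μ / (1 - υ)) + 1 - κ - υ)
        ((1 - υ') * binEnt (κ' / (1 - υ')) + κ' * Real.logb 2 (μ' / (1 - υ')) + 1 - κ' - υ')
      < 1.2992 := by
  by_contra hcon
  rw [not_lt, le_min_iff] at hcon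
  obtain ⟨c1, c2⟩ := hcon
  have hl := Real.log_two_gt_d9
  have b1 := obj_bound μ κ υ hμ0 hκ0 hκμ hκυ
  have b2 := obj_bound μ' κ' υ' hμ'0 hκ'0 hκ'μ' hκ'υ'
  have d1 := mul_le_mul_of_nonneg_right c1 (show 0 ≤ Real.log 2 by linarith)
  have d2 := mul_le_mul_of_nonneg_right c2 (show 0 ≤ Real.log 2 by linarith)
  have f1 := d1.trans b1
  have f2 := d2.trans b2
  clear d1 d2 b1 b2 c1 c2
  norm_num at f1 f2 hl
  linarith
end

section
/- Let n, m, k, u, m', k', u' be natural numbers satisfying: k + u ≤ n, k ≤ m, m ≤ n, m' ≤ n, k' + u' ≤ n, k' ≤ m', k ≤ u', k' ≤ u, and 2(m + m') ≤ 3n + 2(u + u'). Then min{ (n-u choose k)·(m/(n-u))^k·2^{n-k-u} , (n-u' choose k')·(m'/(n-u'))^{k'}·2^{n-k'-u'} } ≤ 2^{1.2992·n}, where the quantities are real numbers, m/(n-u) denotes real division, and in the degenerate case u = n (forcing k = 0) the power (m/(n-u))^k is interpreted as 1 (similarly for u' = n). -/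
lemma log_num1 : (145 : ℝ) / 297 ≤ 2 * Real.log 2 + Real.log 11 - 3 * Real.log 3 := by
  have h : Real.exp (145 / 297) ≤ 44 / 27 := by
    refine (Real.exp_bound' (by norm_num) (by norm_num) (n := 8) (by norm_num)).trans ?_
    norm_num [Finset.sum_range_succ, Nat.factorial]
  have h2 := (Real.le_log_iff_exp_le (by norm_num)).2 h
  have e : Real.log (44 / 27) = 2 * Real.log 2 + Real.log 11 - 3 * Real.log 3 := by
    rw [Real.log_div (by norm_num) (by norm_num), show (44 : ℝ) = 2 ^ 2 * 11 by norm_num,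
      show (27 : ℝ) = 3 ^ 3 by norm_num, Real.log_mul (by norm_num) (by norm_num),
      Real.log_pow, Real.log_pow]
    norm_num
  linarith

lemma log_num2 : Real.log 11 ≤ 3.2992 * Real.log 2 + 1 / 9 := by
  have h : (11 / 8 : ℝ) ≤ Real.exp (0.31849) := by
    refine le_trans ?_ (Real.sum_le_exp_of_nonneg (by norm_num) 8)
    norm_num [Finset.sum_range_succ, Nat.factorial]
  have h2 := (Real.log_le_iff_le_exp (by norm_num)).2 h
  have e : Real.log (11 / 8) = Real.log 11 - 3 * Real.log 2 := by
    rw [Real.log_div (by norm_num) (by norm_num), show (8 : ℝ) = 2 ^ 3 by norm_num, Real.log_pow]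
    norm_num
  have := Real.log_two_gt_d9
  linarith

lemma log_num3 : 4 * Real.log 2 - 3 * Real.log 3 ≤ 0 := by
  have h : Real.log (2 ^ 4) ≤ Real.log (3 ^ 3) := Real.log_le_log (by norm_num) (by norm_num)
  rw [Real.log_pow, Real.log_pow] at h
  norm_num at h
  linarith

/-- Exponential-linear upper bound for one side, with tangent parameters `c = 11/8`, `s = 8/27`. -/
lemma side_bound (n u m k : ℕ) (hku : k + u ≤ n) :
    ((n - u).choose k : ℝ) * ((m : ℝ) / ((n : ℝ) - (u : ℝ))) ^ k * 2 ^ (n - k - u) ≤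
      Real.exp (((n : ℝ) - u) * (Real.log 11 - 2 * Real.log 2 - 3 / 11) + 64 / 297 * m
        - k * (4 * Real.log 2 - 3 * Real.log 3)) := by
  obtain ⟨N, rfl⟩ : ∃ N, n = N + u := ⟨n - u, by omega⟩
  have hkN : k ≤ N := by omega
  obtain ⟨j, rfl⟩ : ∃ j, N = k + j := ⟨N - k, by omega⟩
  rw [show k + j + u - u = k + j by omega, show k + j + u - k - u = j by omega,
    show (((k + j + u : ℕ) : ℝ) - u) = ((k + j : ℕ) : ℝ) by push_cast; ring]
  have hNj : ((k + j : ℕ) : ℝ) = k + j := by push_cast; ring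
  generalize hN : k + j = N at *
  set y : ℝ := (m : ℝ) / N with hy
  have hy0 : 0 ≤ y := by positivity
  have hNy : N * y ≤ m := by
    rw [hy]
    rcases Nat.eq_zero_or_pos N with h | h
    · subst h; simp
    · have : (N : ℝ) ≠ 0 := by positivity
      field_simp; rfl
  have h1 : (N.choose k : ℝ) * (8 / 27 * y) ^ k ≤ (8 / 27 * y + 1) ^ N := by
    rw [add_pow]
    refine le_trans (le_of_eq ?_) (Finset.single_le_sum
      (f := fun i => (8 / 27 * y) ^ i * 1 ^ (N - i) * (N.choose i : ℝ))
      (fun i _ => by positivity) (Finset.mem_range.2 (by omega : k < N + 1)))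
    simp [mul_comm]
  have h2 : (8 / 27 * y + 1) ≤ Real.exp (Real.log (11 / 8) + (8 / 11 * (8 / 27 * y + 1) - 1)) := by
    rw [Real.exp_add, Real.exp_log (by norm_num)]
    have := Real.add_one_le_exp (8 / 11 * (8 / 27 * y + 1) - 1)
    linarith
  have h3 : (8 / 27 * y + 1) ^ N ≤
      Real.exp (N * (Real.log (11 / 8) + (8 / 11 * (8 / 27 * y + 1) - 1))) := by
    rw [Real.exp_nat_mul]
    exact pow_le_pow_left₀ (by positivity) h2 N
  have e1 : Real.log (11 / 8) = Real.log 11 - 3 * Real.log 2 := by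
    rw [Real.log_div (by norm_num) (by norm_num), show (8 : ℝ) = 2 ^ 3 by norm_num, Real.log_pow]
    norm_num
  have e2 : Real.log (27 / 8) = 3 * Real.log 3 - 3 * Real.log 2 := by
    rw [Real.log_div (by norm_num) (by norm_num), show (8 : ℝ) = 2 ^ 3 by norm_num,
      show (27 : ℝ) = 3 ^ 3 by norm_num, Real.log_pow, Real.log_pow]
    norm_num
  have h4 : ((27 : ℝ) / 8) ^ k = Real.exp (k * Real.log (27 / 8)) := by
    rw [Real.exp_nat_mul, Real.exp_log (by norm_num)]
  have h5 : (2 : ℝ) ^ j = Real.exp (j * Real.log 2) := by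
    rw [Real.exp_nat_mul, Real.exp_log (by norm_num)]
  calc (N.choose k : ℝ) * y ^ k * 2 ^ j
      = ((N.choose k : ℝ) * (8 / 27 * y) ^ k) * (27 / 8) ^ k * 2 ^ j := by
        have : y ^ k = (8 / 27 * y) ^ k * (27 / 8) ^ k := by
          rw [← mul_pow]; congr 1; ring
        rw [this]; ring
    _ ≤ Real.exp (N * (Real.log (11 / 8) + (8 / 11 * (8 / 27 * y + 1) - 1)))
          * (27 / 8) ^ k * 2 ^ j := by
        gcongr
        exact h1.trans h3
    _ ≤ _ := by
        rw [h4, h5, ← Real.exp_add, ← Real.exp_add, Real.exp_le_exp, e1, e2]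
        have hj : (j : ℝ) = N - k := by linarith
        rw [hj]
        nlinarith

theorem cutpath_count_bound (n m k u m' k' u' : ℕ)
    (hku : k + u ≤ n) (hkm : k ≤ m) (hm : m ≤ n) (hm' : m' ≤ n)
    (hk'u' : k' + u' ≤ n) (hk'm' : k' ≤ m')
    (hku' : k ≤ u') (hk'u : k' ≤ u)
    (hzone : 2 * (m + m') ≤ 3 * n + 2 * (u + u')) :
    min (((n - u).choose k : ℝ) * ((m : ℝ) / ((n : ℝ) - (u : ℝ))) ^ k * 2 ^ (n - k - u))
        (((n - u').choose k' : ℝ) * ((m' : ℝ) / ((n : ℝ) - (u' : ℝ))) ^ k' * 2 ^ (n - k' - u'))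
      ≤ (2 : ℝ) ^ ((1.2992 : ℝ) * n) := by
  have hA := side_bound n u m k hku
  have hB := side_bound n u' m' k' hk'u'
  have l1 := log_num1
  have l2 := log_num2
  have l3 := log_num3
  have r : (2 : ℝ) ^ ((1.2992 : ℝ) * n) = Real.exp (Real.log 2 * (1.2992 * n)) :=
    Real.rpow_def_of_pos (by norm_num) _
  rw [r]
  have c1 : (k : ℝ) ≤ u' := by exact_mod_cast hku'
  have c2 : (k' : ℝ) ≤ u := by exact_mod_cast hk'u
  have c3 : 2 * ((m : ℝ) + m') ≤ 3 * n + 2 * (u + u') := by exact_mod_cast hzone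
  have p1 := mul_nonneg (sub_nonneg.2 c1) (neg_nonneg.2 l3)
  have p2 := mul_nonneg (sub_nonneg.2 c2) (neg_nonneg.2 l3)
  have p3 := mul_nonneg (add_nonneg (Nat.cast_nonneg (α := ℝ) u) (Nat.cast_nonneg (α := ℝ) u'))
    (sub_nonneg.2 l1)
  have p4 := mul_nonneg (Nat.cast_nonneg (α := ℝ) n) (sub_nonneg.2 l2)
  rcases le_total
    (((n : ℝ) - u) * (Real.log 11 - 2 * Real.log 2 - 3 / 11) + 64 / 297 * m
        - k * (4 * Real.log 2 - 3 * Real.log 3))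
    (((n : ℝ) - u') * (Real.log 11 - 2 * Real.log 2 - 3 / 11) + 64 / 297 * m'
        - k' * (4 * Real.log 2 - 3 * Real.log 3)) with h | h
  · refine (min_le_left _ _).trans (hA.trans (Real.exp_le_exp.2 ?_))
    linarith
  · refine (min_le_right _ _).trans (hB.trans (Real.exp_le_exp.2 ?_))
    linarith
end
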